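/- Let M be a positive integer, a an integer coprime to M, L a positive integer, and G_L = ∑_{m=0}^{L−1} a^m. Then there is an isomorphism of additive groups (ZMod M)[X^{±1}] ⧸ Ideal.span {(X − a)(X − 1), G_L · (X − 1)} ≅ ZMod M × ZMod (gcd(M, G_L)), where the one-variable Laurent polynomial ring (ZMod M)[X^{±1}] is realized as AddMonoidAlgebra (ZMod M) ℤ. -/

import Mathlib

/-- The one-variable Laurent polynomial ring `(ZMod M)[X^{±1}]`. -/
abbrev L1 (M : ℕ) : Type := AddMonoidAlgebra (ZMod M) ℤ

/-- The monomial `X`. -/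
noncomputable def Xv (M : ℕ) : L1 M := AddMonoidAlgebra.single (1 : ℤ) 1

/-!
Fix units `u`, `v` and a scalar `g` of a commutative ring `R`. Every Laurent polynomial is uniquely
`f = f(v) + (X - v) q`, since `X - v` is a nonzerodivisor generating the kernel of evaluation
at `v`. The ideal generated by `(X - u)(X - v)` and `g (X - v)` is `(X - v) K`, where
`K = (X - u, g)` consists of the `q` with `q(u) ∈ (g)`. Hence `f ↦ (f(v), q(u) mod g)` induces an
isomorphism from the quotient onto `R × R/(g)`. For `R = ℤ/M` and an integer `g`, the second factor
is `ℤ/gcd(M, g)`.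
-/

open LaurentPolynomial nonZeroDivisors

/-- The isomorphism `A ⧸ f⁻¹(J) ≃ B ⧸ J` induced by a surjection `f : A → B`. -/
noncomputable def quotientComapEquivOfSurjective {R A B : Type*} [CommRing R] [CommRing A]
    [CommRing B] [Algebra R A] [Algebra R B] {f : A →ₐ[R] B} (hf : Function.Surjective f)
    (J : Ideal B) : (A ⧸ J.comap f) ≃ₐ[R] B ⧸ J :=
  have h_ker : J.comap f = RingHom.ker ((Ideal.Quotient.mkₐ R J).comp f) := by
    ext a
    simp [RingHom.mem_ker, Ideal.Quotient.eq_zero_iff_mem]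
  (Ideal.quotientEquivAlgOfEq R h_ker).trans <|
    Ideal.quotientKerAlgEquivOfSurjective ((Ideal.Quotient.mkₐ_surjective R J).comp hf)

section RetractionOntoScalars

variable {R A : Type*} [CommRing R] [CommRing A] [Algebra R A] {ε : A →ₐ[R] R} {t : A}

theorem bijective_coprod_algebraMap_mulLeft (hε : RingHom.ker ε = Ideal.span {t}) (ht : t ∈ A⁰) :
    Function.Bijective ((Algebra.linearMap R A).coprod (LinearMap.mulLeft R t)) := by
  have hεt : ε t = 0 := by
    rw [← RingHom.mem_ker, hε]
    exact Ideal.mem_span_singleton_self t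
  constructor
  · rw [injective_iff_map_eq_zero]
    rintro ⟨r, q⟩ h
    have h_sum : algebraMap R A r + t * q = 0 := h
    obtain rfl : r = 0 := by simpa [hεt] using congrArg ε h_sum
    rw [map_zero, zero_add, mul_left_mem_nonZeroDivisors_eq_zero_iff ht] at h_sum
    rw [h_sum, Prod.mk_zero_zero]
  · intro f
    have hf : f - algebraMap R A (ε f) ∈ RingHom.ker ε := by simp [RingHom.mem_ker]
    rw [hε, Ideal.mem_span_singleton] at hf
    obtain ⟨q, hq⟩ := hf
    exact ⟨(ε f, q), by simp [← hq]⟩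

/-- The decomposition `A = R ⊕ t A`, with `t A` identified with `A`: a pair `(r, q)` corresponds
to `r + t * q`, so `q` is the divided difference `(f - ε f) / t` of the element `f`. -/
noncomputable def prodEquivOfKerEqSpan (hε : RingHom.ker ε = Ideal.span {t}) (ht : t ∈ A⁰) :
    (R × A) ≃ₗ[R] A :=
  .ofBijective _ (bijective_coprod_algebraMap_mulLeft hε ht)

theorem map_prodEquivOfKerEqSpan_prod (hε : RingHom.ker ε = Ideal.span {t}) (ht : t ∈ A⁰)
    (K : Ideal A) :
    ((⊥ : Submodule R R).prod (K.restrictScalars R)).map (prodEquivOfKerEqSpan hε ht).toLinearMap =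
      (Ideal.span {t} * K).restrictScalars R := by
  ext f
  rw [Submodule.restrictScalars_mem, Ideal.mem_span_singleton_mul]
  simp [prodEquivOfKerEqSpan, -Submodule.mem_map_equiv, Submodule.mem_map]

theorem ker_id_prodMap_mk_comp_symm (hε : RingHom.ker ε = Ideal.span {t}) (ht : t ∈ A⁰)
    (K : Ideal A) :
    LinearMap.ker ((LinearMap.id.prodMap (Ideal.Quotient.mkₐ R K).toLinearMap) ∘ₗ
        (prodEquivOfKerEqSpan hε ht).symm.toLinearMap) =
      (Ideal.span {t} * K).restrictScalars R := by
  have h_mk : LinearMap.ker (Ideal.Quotient.mkₐ R K).toLinearMap = K.restrictScalars R := by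
    ext q
    simp [Ideal.Quotient.eq_zero_iff_mem]
  rw [LinearMap.ker_comp, ← Submodule.map_equiv_eq_comap_symm, LinearMap.ker_prodMap,
    LinearMap.ker_id, h_mk, map_prodEquivOfKerEqSpan_prod]

/-- The isomorphism `A ⧸ t K ≃ R × A ⧸ K` induced by `r + t * q ↦ (r, q)`. -/
noncomputable def quotientSpanMulEquiv (hε : RingHom.ker ε = Ideal.span {t}) (ht : t ∈ A⁰)
    (K : Ideal A) : (A ⧸ Ideal.span {t} * K) ≃ₗ[R] R × (A ⧸ K) :=
  (Submodule.Quotient.restrictScalarsEquiv R (Ideal.span {t} * K)).symm.trans <|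
    (Submodule.quotEquivOfEq _ _ (ker_id_prodMap_mk_comp_symm hε ht K).symm).trans <|
      LinearMap.quotKerEquivOfSurjective _ <|
        (Function.surjective_id.prodMap (Ideal.Quotient.mkₐ_surjective R K)).comp
          (prodEquivOfKerEqSpan hε ht).symm.surjective

theorem surjective_of_algHom_self (ε : A →ₐ[R] R) : Function.Surjective ε :=
  Function.RightInverse.surjective ε.commutes

theorem comap_eq_ker_sup_map_algebraMap (ε : A →ₐ[R] R) (J : Ideal R) :
    J.comap ε = RingHom.ker ε ⊔ J.map (algebraMap R A) := by
  have h_map : (J.map (algebraMap R A)).map ε = J := by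
    rw [← Ideal.map_coe ε, Ideal.map_map, AlgHom.comp_algebraMap, Algebra.algebraMap_self,
      Ideal.map_id]
  rw [← congrArg (Ideal.comap ε) h_map,
    Ideal.comap_map_of_surjective ε (surjective_of_algHom_self ε), sup_comm,
    ← RingHom.ker_eq_comap_bot]

end RetractionOntoScalars

section LaurentEvaluation

variable {R : Type*} [CommRing R]

/-- Evaluation of Laurent polynomials at a unit, as a homomorphism of algebras. -/
noncomputable def laurentEval (u : Rˣ) : R[T;T⁻¹] →ₐ[R] R where
  __ := eval₂ (RingHom.id R) u
  commutes' := eval₂_C (RingHom.id R) u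

theorem laurentEval_toLaurent (u : Rˣ) (p : Polynomial R) :
    laurentEval u p.toLaurent = p.eval ↑u :=
  eval₂_toLaurent (RingHom.id R) u p

theorem toLaurent_X_sub_C (r : R) :
    Polynomial.toLaurent (Polynomial.X - Polynomial.C r) = T 1 - C r := by
  rw [map_sub, Polynomial.toLaurent_X, Polynomial.toLaurent_C]

theorem T_one_sub_C_mem_nonZeroDivisors (r : R) : (T 1 - C r : R[T;T⁻¹]) ∈ R[T;T⁻¹]⁰ := by
  rw [← toLaurent_X_sub_C]
  exact IsLocalization.map_nonZeroDivisors_le (.powers Polynomial.X) R[T;T⁻¹]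
    ⟨_, (Polynomial.monic_X_sub_C r).mem_nonZeroDivisors, rfl⟩

theorem ker_laurentEval (u : Rˣ) :
    RingHom.ker (laurentEval u) = Ideal.span {T 1 - C (u : R)} := by
  rw [← toLaurent_X_sub_C]
  refine le_antisymm (fun f hf ↦ ?_) ?_
  · obtain ⟨n, p, hp⟩ := exists_T_pow f
    have hroot : p.IsRoot u := by
      rw [Polynomial.IsRoot, ← laurentEval_toLaurent, hp, map_mul, hf, zero_mul]
    rw [Ideal.mem_span_singleton, ← (isUnit_T n).dvd_mul_right, ← hp]
    exact map_dvd _ (Polynomial.dvd_iff_isRoot.2 hroot)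
  · rw [Ideal.span_singleton_le_iff_mem, RingHom.mem_ker, laurentEval_toLaurent]
    simp

theorem span_pair_eq_span_mul_comap_laurentEval (u : Rˣ) (r g : R) :
    Ideal.span {(T 1 - C (u : R)) * (T 1 - C r), C g * (T 1 - C r)} =
      Ideal.span {T 1 - C r} * (Ideal.span {g}).comap (laurentEval u) := by
  rw [comap_eq_ker_sup_map_algebraMap, ker_laurentEval, Ideal.map_span, Set.image_singleton,
    ← Ideal.span_insert, Ideal.span_mul_span', Set.singleton_mul, Set.image_pair, mul_comm,
    mul_comm (C g), ← C_eq_algebraMap]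

theorem stmt16_general (u v : Rˣ) (g : R) :
    Nonempty ((R[T;T⁻¹] ⧸ Ideal.span
        {(T 1 - C (u : R)) * (T 1 - C (v : R)), C g * (T 1 - C (v : R))}) ≃ₗ[R]
      R × (R ⧸ Ideal.span {g})) := by
  rw [span_pair_eq_span_mul_comap_laurentEval]
  let e := quotientSpanMulEquiv (ker_laurentEval v) (T_one_sub_C_mem_nonZeroDivisors _)
    ((Ideal.span {g}).comap (laurentEval u))
  exact ⟨e.trans <| .prodCongr (.refl R R) <|
    (quotientComapEquivOfSurjective (surjective_of_algHom_self (laurentEval u)) _).toLinearEquiv⟩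

end LaurentEvaluation

theorem ker_castHom_gcd (M : ℕ) (G : ℤ) :
    RingHom.ker (ZMod.castHom (Int.gcd_dvd_natAbs_left (M : ℤ) G) (ZMod (Int.gcd M G))) =
      Ideal.span {(G : ZMod M)} := by
  set π := ZMod.castHom (Int.gcd_dvd_natAbs_left (M : ℤ) G) (ZMod (Int.gcd M G))
  let c := Int.castRingHom (ZMod M)
  calc RingHom.ker π
    _ = (RingHom.ker (Int.castRingHom (ZMod (Int.gcd M G)))).map c := by
      rw [← Ideal.map_comap_of_surjective c ZMod.intCast_surjective (RingHom.ker π),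
        RingHom.comap_ker, RingHom.eq_intCast' (π.comp c)]
    _ = (Ideal.span {(M : ℤ), G}).map c := by
      rw [ZMod.ker_intCastRingHom, Int.coe_gcd, span_gcd]
    _ = Ideal.span {(G : ZMod M)} := by
      rw [Ideal.map_span, Set.image_pair, eq_intCast, eq_intCast, Int.cast_natCast,
        ZMod.natCast_self, Ideal.span_insert_zero]

/-- The isomorphism `(ℤ/M) ⧸ (G) ≃ ℤ/gcd(M, G)` given by reduction. -/
noncomputable def quotientSpanIntCastEquivZModGcd (M : ℕ) (G : ℤ) :
    (ZMod M ⧸ Ideal.span {(G : ZMod M)}) ≃+* ZMod (Int.gcd M G) :=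
  (Ideal.quotEquivOfEq (ker_castHom_gcd M G).symm).trans <|
    RingHom.quotientKerEquivOfSurjective (ZMod.castHom_surjective _)

/-- For `a` coprime to `M` and `G_L = ∑_{m<L} a^m`, the quotient of `(ZMod M)[X^{±1}]` by
`((X-a)(X-1), G_L (X-1))` is `ZMod M × ZMod (gcd(M, G_L))` as an additive group. -/
theorem stmt16 (M : ℕ) (hM : 0 < M) (a : ℤ) (ha : IsCoprime a (M : ℤ))
    (L : ℕ) (hL : 0 < L) :
    Nonempty ((L1 M ⧸ Ideal.span
        {(Xv M - (a : L1 M)) * (Xv M - 1),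
          ((∑ m ∈ Finset.range L, a ^ m : ℤ) : L1 M) * (Xv M - 1)}) ≃+
      (ZMod M × ZMod (Int.gcd (M : ℤ) (∑ m ∈ Finset.range L, a ^ m)))) := by
  obtain ⟨e⟩ := stmt16_general (ZMod.unitOfIsCoprime a ha) 1
    ((∑ m ∈ Finset.range L, a ^ m : ℤ) : ZMod M)
  rw [ZMod.coe_unitOfIsCoprime, Units.val_one, map_intCast, map_intCast, map_one] at e
  exact ⟨e.toAddEquiv.trans
    (.prodCongr (.refl _) (quotientSpanIntCastEquivZModGcd M _).toAddEquiv)⟩
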